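/- arXiv:2407.08438 — 2 statements merged into one kernel-verified Lean document; each statement's English description precedes it below -/
import Mathlib

section
/- Let K and L be number fields. Then the set of prime numbers p that split completely in both K and L is infinite. -/
open NumberField

/-- A prime number `p` splits completely in a number field `K` if every prime ideal of
`𝓞 K` lying above `p` has ramification index 1 and residue degree 1. -/
def SplitsCompletely (K : Type*) [Field K] [NumberField K] (p : ℕ) : Prop :=
  ∀ P : Ideal (𝓞 K), P.IsPrime → (p : 𝓞 K) ∈ P →
    Ideal.ramificationIdx' (Ideal.span {(p : ℤ)}) P = 1 ∧
    Ideal.inertiaDeg' (Ideal.span {(p : ℤ)}) P = 1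

open Polynomial

lemma exists_prime_dvd_eval (f : ℤ[X]) (hf : 0 < f.natDegree) (B : ℕ) :
    ∃ p : ℕ, p.Prime ∧ B < p ∧ ∃ n : ℤ, (p : ℤ) ∣ f.eval n := by
  have key : ∀ g : ℤ[X], g ≠ 0 → ∀ a b : ℤ, b ≠ 0 → ∃ x : ℤ, g.eval (a + b * x) ≠ 0 := by
    intro g hg a b hb
    by_contra! h
    apply hg
    apply Polynomial.eq_zero_of_infinite_isRoot
    refine (Set.infinite_range_of_injective (f := fun x : ℤ => a + b * x) ?_).mono ?_
    · intro x y hxy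
      simpa [hb] using hxy
    · rintro _ ⟨x, rfl⟩
      exact h x
  have hf0 : f ≠ 0 := by rintro rfl; simp at hf
  obtain ⟨a, ha⟩ := key f hf0 0 1 one_ne_zero
  set a' := (0 : ℤ) + 1 * a
  set c := f.eval a' with hc
  have hB : ((B.factorial : ℕ) : ℤ) ≠ 0 := by exact_mod_cast B.factorial_ne_zero
  have hC : ∀ d : ℤ, f - C d ≠ 0 := by
    intro d h
    have : f = C d := sub_eq_zero.mp h
    rw [this] at hf; simp at hf
  obtain ⟨x, hx⟩ := key ((f - C c) * (f - C (-c))) (mul_ne_zero (hC _) (hC _)) a'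
    (c * B.factorial) (mul_ne_zero ha hB)
  obtain ⟨k, hk⟩ := f.sub_dvd_eval_sub (a' + c * B.factorial * x) a'
  have h1 : f.eval (a' + c * B.factorial * x) = c * (1 + B.factorial * (x * k)) := by
    rw [← hc] at hk; linear_combination hk
  simp only [eval_mul, eval_sub, eval_C, h1, mul_ne_zero_iff, sub_ne_zero] at hx
  have h2 : (1 + B.factorial * (x * k) : ℤ).natAbs ≠ 1 := by
    intro h
    rcases Int.natAbs_eq_iff.mp h with h | h
    · exact hx.1 (by rw [h]; simp)
    · exact hx.2 (by rw [h]; simp)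
  obtain ⟨p, hp, hpd⟩ := Nat.exists_prime_and_dvd h2
  rw [← Int.natCast_dvd] at hpd
  refine ⟨p, hp, ?_, _, h1 ▸ hpd.mul_left c⟩
  by_contra! hle
  have h3 : (p : ℤ) ∣ B.factorial := by
    exact_mod_cast (hp.dvd_factorial.mpr hle)
  have h4 : (p : ℤ) ∣ 1 := (dvd_add_left (h3.mul_right (x * k))).mp hpd
  have h5 : p ∣ 1 := by exact_mod_cast h4
  exact hp.one_lt.ne' (Nat.dvd_one.mp h5)

lemma splits_of_galois (K M : Type*) [Field K] [NumberField K] [Field M] [NumberField M]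
    [IsGalois ℚ M] [Algebra K M] (p : ℕ) (hp : p.Prime) (P : Ideal (𝓞 M)) [P.IsPrime]
    [P.LiesOver (Ideal.span {(p : ℤ)})] (he : P.ramificationIdx ℤ = 1)
    (hf : P.inertiaDeg ℤ = 1) : SplitsCompletely K p := by
  intro q hq hpq
  have hp0 : (Ideal.span {(p : ℤ)}) ≠ ⊥ := by simp [hp.ne_zero]
  have := Fact.mk hp
  have : (Ideal.span {(p : ℤ)}).IsMaximal := Int.ideal_span_isMaximal_of_prime p
  have hqp : q.LiesOver (Ideal.span {(p : ℤ)}) := by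
    constructor
    refine Ideal.IsMaximal.eq_of_le inferInstance ?_ ?_
    · exact (hq.comap _).ne_top
    · rw [Ideal.span_singleton_le_iff_mem]
      simpa [Ideal.under] using hpq
  have : q.IsMaximal := hq.isMaximal (Ideal.ne_bot_of_liesOver_of_ne_bot hp0 q)
  rw [Ideal.ramificationIdx'_eq_ramificationIdx _ _ hp0, Ideal.inertiaDeg'_eq_inertiaDeg]
  obtain ⟨⟨Q, _, _⟩⟩ := (inferInstance : Nonempty (q.primesOver (𝓞 M)))
  have : Q.LiesOver (Ideal.span {(p : ℤ)}) := Ideal.LiesOver.trans Q q _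
  have h1 := Ideal.ramificationIdx_eq_of_isGaloisGroup (Ideal.span {(p : ℤ)}) P Q Gal(M/ℚ)
  have h2 := Ideal.inertiaDeg_eq_of_isGaloisGroup (Ideal.span {(p : ℤ)}) P Q Gal(M/ℚ)
  have h3 := Ideal.ramificationIdx_below_dvd (R := ℤ) q Q
  have h4 := Ideal.inertiaDeg_below_dvd (R := ℤ) q Q
  rw [← h1, he] at h3
  rw [← h2, hf] at h4
  exact ⟨Nat.dvd_one.mp h3, Nat.dvd_one.mp h4⟩

lemma exists_galois (K L : Type*) [Field K] [NumberField K] [Field L] [NumberField L] :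
    ∃ (M : Type) (_ : Field M) (_ : NumberField M) (_ : IsGalois ℚ M),
      Nonempty (K →ₐ[ℚ] M) ∧ Nonempty (L →ₐ[ℚ] M) := by
  let Ω := AlgebraicClosure ℚ
  have hΩ : Normal ℚ Ω := by
    have h : @Normal ℚ (AlgebraicClosure ℚ) _ _ (AlgebraicClosure.instAlgebra ℚ) :=
      IsAlgClosure.normal ℚ _
    convert! h
  let A := IntermediateField.normalClosure ℚ K Ω
  let B := IntermediateField.normalClosure ℚ L Ω
  let φ : K →ₐ[ℚ] Ω := IsAlgClosed.lift
  let ψ : L →ₐ[ℚ] Ω := IsAlgClosed.lift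
  have h1 : φ.fieldRange ≤ A ⊔ B := (AlgHom.fieldRange_le_normalClosure φ).trans le_sup_left
  have h2 : ψ.fieldRange ≤ A ⊔ B := (AlgHom.fieldRange_le_normalClosure ψ).trans le_sup_right
  have hA : Normal ℚ A := normalClosure.normal ℚ K Ω
  have hB : Normal ℚ B := normalClosure.normal ℚ L Ω
  have : Normal ℚ (A ⊔ B : IntermediateField ℚ Ω) := IntermediateField.normal_sup ℚ Ω A B
  have : FiniteDimensional ℚ (A ⊔ B : IntermediateField ℚ Ω) := inferInstance
  refine ⟨(A ⊔ B : IntermediateField ℚ Ω), inferInstance, ⟨⟩, ⟨⟩, ⟨?_⟩, ⟨?_⟩⟩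
  · exact (IntermediateField.inclusion h1).comp φ.rangeRestrict
  · exact (IntermediateField.inclusion h2).comp ψ.rangeRestrict

lemma exponent_ne (M : Type*) [Field M] [NumberField M] (θ : 𝓞 M)
    (h : Algebra.adjoin ℚ {algebraMap (𝓞 M) M θ} = ⊤) : RingOfIntegers.exponent θ ≠ 0 := by
  have hc := conductor_mul_differentIdeal ℤ ℚ M θ h
  have hne : aeval θ (derivative (minpoly ℤ θ)) ≠ 0 := by
    intro h0
    have h1 := congrArg (algebraMap (𝓞 M) M) h0
    rw [← aeval_algebraMap_apply, map_zero, ← aeval_map_algebraMap ℚ,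
      ← derivative_map, ← minpoly.isIntegrallyClosed_eq_field_fractions ℚ M θ.isIntegral] at h1
    have : IsSeparable ℚ (algebraMap (𝓞 M) M θ) := Algebra.IsSeparable.isSeparable _ _
    exact this.aeval_derivative_ne_zero (minpoly.aeval _ _) h1
  have hc0 : conductor ℤ θ ≠ ⊥ := by
    intro h0
    rw [h0, Ideal.bot_mul] at hc
    exact hne (Ideal.span_singleton_eq_bot.mp hc.symm)
  unfold RingOfIntegers.exponent
  rw [Ne, Ideal.absNorm_eq_zero_iff]
  intro h0
  exact hc0 (Ideal.eq_bot_of_comap_eq_bot h0)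

lemma exists_theta (M : Type*) [Field M] [NumberField M] :
    ∃ θ : 𝓞 M, Algebra.adjoin ℚ {algebraMap (𝓞 M) M θ} = ⊤ := by
  obtain ⟨α, hα⟩ := Field.exists_primitive_element ℚ M
  have halg : IsAlgebraic ℤ α :=
    (IsFractionRing.isAlgebraic_iff ℤ ℚ M).mpr (Algebra.IsAlgebraic.isAlgebraic (R := ℚ) α)
  obtain ⟨y, hy, hint⟩ := halg.exists_integral_multiple
  refine ⟨⟨y • α, hint⟩, ?_⟩
  have h1 : algebraMap (𝓞 M) M ⟨y • α, hint⟩ = (y : M) * α := by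
    simp
  rw [h1, ← IntermediateField.adjoin_simple_toSubalgebra_of_isAlgebraic (Algebra.IsAlgebraic.isAlgebraic _), ← IntermediateField.top_toSubalgebra, ← hα]
  congr 1
  apply le_antisymm
  · rw [hα]; exact le_top
  · rw [IntermediateField.adjoin_simple_le_iff]
    have h2 : (y : M) * α ∈ IntermediateField.adjoin ℚ {(y : M) * α} := IntermediateField.mem_adjoin_simple_self _ _
    have h3 : ((y : M))⁻¹ * ((y : M) * α) ∈ IntermediateField.adjoin ℚ {(y : M) * α} :=
      mul_mem (inv_mem (intCast_mem _ _)) h2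
    rwa [inv_mul_cancel_left₀ (by exact_mod_cast hy)] at h3

lemma exists_prime_deg_one (M : Type*) [Field M] [NumberField M] (N : ℕ) :
    ∃ p : ℕ, p.Prime ∧ N < p ∧ ∃ P : Ideal (𝓞 M), P.IsPrime ∧
      P.LiesOver (Ideal.span {(p : ℤ)}) ∧ P.ramificationIdx ℤ = 1 ∧ P.inertiaDeg ℤ = 1 := by
  obtain ⟨θ, hθ⟩ := exists_theta M
  have hex := exponent_ne M θ hθ
  obtain ⟨p, hp, hlt, n, hn⟩ := exists_prime_dvd_eval (minpoly ℤ θ)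
    (minpoly.natDegree_pos θ.isIntegral) (N + RingOfIntegers.exponent θ + (discr M).natAbs)
  have hpe : ¬ p ∣ RingOfIntegers.exponent θ := fun h => by
    have := Nat.le_of_dvd (Nat.pos_of_ne_zero hex) h
    omega
  have hpd : ¬ (p : ℤ) ∣ discr M := fun h => by
    have := Nat.le_of_dvd (Int.natAbs_pos.mpr (discr_ne_zero M)) (Int.natCast_dvd.mp h)
    omega
  have := Fact.mk hp
  have hQ : (X - C (n : ZMod p)) ∈ RingOfIntegers.monicFactorsMod θ p := by
    rw [Multiset.mem_toFinset, Polynomial.mem_normalizedFactors_iff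
      (map_monic_ne_zero (minpoly.monic θ.isIntegral))]
    refine ⟨irreducible_X_sub_C _, monic_X_sub_C _, ?_⟩
    rw [dvd_iff_isRoot, IsRoot.def, ← eq_intCast (Int.castRingHom (ZMod p)) n,
      eval_map_apply, eq_intCast, ZMod.intCast_zmod_eq_zero_iff_dvd]
    exact hn
  have hdeg := NumberField.Ideal.inertiaDeg_primesOverSpanEquivMonicFactorsMod_symm_apply' hpe hQ
  set P := (NumberField.Ideal.primesOverSpanEquivMonicFactorsMod hpe).symm ⟨_, hQ⟩
  have := P.2.1
  have hlo := P.2.2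
  refine ⟨p, hp, by omega, P.1, P.2.1, P.2.2, ?_, by rw [hdeg, natDegree_X_sub_C]⟩
  have hun := (not_dvd_discr_iff_isUnramifiedIn M (𝓞 M) (Nat.prime_iff_prime_int.mp hp)).mp hpd
  exact hun.ramificationIdx_eq_one hlo

/-- For any two number fields `K` and `L`, infinitely many prime numbers split
completely in both. -/
theorem infinitely_many_split_primes (K L : Type*) [Field K] [NumberField K]
    [Field L] [NumberField L] :
    {p : ℕ | p.Prime ∧ SplitsCompletely K p ∧ SplitsCompletely L p}.Infinite := by
  obtain ⟨M, _, _, _, ⟨φ⟩, ⟨ψ⟩⟩ := exists_galois K L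
  refine Set.infinite_of_forall_exists_gt fun N => ?_
  obtain ⟨p, hp, hN, P, _, _, he, hf⟩ := exists_prime_deg_one M N
  refine ⟨p, ⟨hp, ?_, ?_⟩, hN⟩
  · let := φ.toRingHom.toAlgebra
    exact splits_of_galois K M p hp P he hf
  · let := ψ.toRingHom.toAlgebra
    exact splits_of_galois L M p hp P he hf
end

section
/- Let K and L be number fields, let R be a sieve in residue form for K and S a sieve in residue form for L, and let A : 𝓞_K → 𝓞_L be a ℤ-linear map. Suppose there are infinitely many prime numbers p satisfying all of the following: (a) for every x ∈ 𝓞_K such that x ∉ R_𝔭 for all prime ideals 𝔭 of 𝓞_K dividing p, one has A(x) ∉ S_𝔮 for all prime ideals 𝔮 of 𝓞_L dividing p; (b) for every prime ideal 𝔮 of 𝓞_L dividing p there exists x ∈ 𝓞_K with A(x) ∈ S_𝔮; (c) ∑_{𝔭 ∣ p} meas(R_𝔭) < 1, the sum over prime ideals 𝔭 of 𝓞_K dividing p; (d) p splits completely in both K and L. Then there exist a field embedding τ : K → L and an element ε ∈ 𝓞_L such that A(x) = ε·τ(x) for all x ∈ 𝓞_K. -/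
open NumberField

/-- A sieve in residue form for a number field `K`. -/
structure ResidueSieve (K : Type*) [Field K] [NumberField K] where
  k : Ideal (𝓞 K) → ℕ
  k_pos : ∀ P : Ideal (𝓞 K), 1 ≤ k P
  R : (P : Ideal (𝓞 K)) → Set (𝓞 K ⧸ P ^ k P)

/-- `x ∈ R_𝔭`: the residue class of `x` modulo `𝔭^{k(𝔭)}` belongs to `R 𝔭`. -/
def ResidueSieve.Mem {K : Type*} [Field K] [NumberField K] (S : ResidueSieve K)
    (P : Ideal (𝓞 K)) (x : 𝓞 K) : Prop :=
  Ideal.Quotient.mk (P ^ S.k P) x ∈ S.R P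

/-- The Haar measure of the sieve set at `P`. -/
noncomputable def ResidueSieve.meas {K : Type*} [Field K] [NumberField K]
    (S : ResidueSieve K) (P : Ideal (𝓞 K)) : ℝ :=
  (Nat.card ↥(S.R P) : ℝ) / (Ideal.absNorm P : ℝ) ^ (S.k P)

open scoped Pointwise in
/-- Finite union bound over surjections onto finite groups. -/
theorem exists_avoid {G ι : Type*} [AddGroup G] [Fintype ι] {B : ι → Type*}
    [∀ i, AddGroup (B i)] [∀ i, Finite (B i)] (f : ∀ i, G →+ B i)
    (hf : ∀ i, Function.Surjective (f i)) (T : ∀ i, Set (B i))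
    (hT : ∑ i, (Nat.card (T i) : ℝ) / (Nat.card (B i) : ℝ) < 1) :
    ∃ g, ∀ i, f i g ∉ T i := by
  classical
  by_contra! hcon
  have hft : ∀ i, Fintype (T i) := fun i => Fintype.ofFinite _
  choose g hg using hf
  have hcov : ⋃ k ∈ (Finset.univ : Finset (Σ i, T i)),
      (g k.1 k.2.1) +ᵥ (((f k.1).ker : AddSubgroup G) : Set G) = Set.univ := by
    rw [Set.eq_univ_iff_forall]
    intro x
    obtain ⟨i, hi⟩ := hcon x
    simp only [Set.mem_iUnion]
    refine ⟨⟨i, f i x, hi⟩, Finset.mem_univ _, ?_⟩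
    rw [Set.mem_vadd_set_iff_neg_vadd_mem]
    simp [AddMonoidHom.mem_ker, hg]
  have h1 := AddSubgroup.one_le_sum_inv_index_of_leftCoset_cover hcov
  have hidx : ∀ i, (f i).ker.index = Nat.card (B i) := by
    intro i
    rw [AddSubgroup.index_ker, AddMonoidHom.range_eq_top.2 (fun b => ⟨g i b, hg i b⟩)]
    simp
  rw [Finset.univ_sigma_univ.symm, Finset.sum_sigma] at h1
  simp only [hidx, Finset.sum_const, Finset.card_univ, nsmul_eq_mul] at h1
  have h2 : (1 : ℝ) ≤ ((∑ i, (Fintype.card (T i) : ℚ) * ((Nat.card (B i) : ℚ))⁻¹ : ℚ) : ℝ) := by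
    exact_mod_cast h1
  push_cast at h2
  simp only [Nat.card_eq_fintype_card (α := T _), div_eq_mul_inv] at hT
  linarith

section
variable {K : Type*} [Field K] [NumberField K]

theorem over_of_split {p : ℕ} (h : SplitsCompletely K p) (P : Ideal (𝓞 K))
    (hP : P.IsPrime) (hp : (p : 𝓞 K) ∈ P) : P.LiesOver (Ideal.span {(p : ℤ)}) := by
  have h1 := (h P hP hp).2
  unfold Ideal.inertiaDeg' at h1
  split_ifs at h1 with h2
  · exact ⟨h2.symm⟩

theorem int_surj {p : ℕ} (hpp : p.Prime) (h : SplitsCompletely K p) (P : Ideal (𝓞 K))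
    (hP : P.IsPrime) (hp : (p : 𝓞 K) ∈ P) (x : 𝓞 K) : ∃ n : ℤ, x - n ∈ P := by
  have := over_of_split h P hP hp
  have h1 := (h P hP hp).2
  rw [Ideal.inertiaDeg'_algebraMap] at h1
  have : (Ideal.span {(p : ℤ)}).IsMaximal :=
    PrincipalIdealRing.isMaximal_of_irreducible (Nat.prime_iff_prime_int.1 hpp).irreducible
  letI := Ideal.Quotient.field (Ideal.span {(p : ℤ)})
  have h2 := (Module.Free.bijective_algebraMap_of_finrank_eq_one h1).2
  obtain ⟨y, hy⟩ := h2 (Ideal.Quotient.mk P x)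
  obtain ⟨n, rfl⟩ := Ideal.Quotient.mk_surjective y
  refine ⟨n, ?_⟩
  rw [← Ideal.Quotient.eq, ← hy]
  simp

theorem prime_le_pow_sup {p : ℕ} (h : SplitsCompletely K p) (P : Ideal (𝓞 K))
    (hP : P.IsPrime) (hP0 : P ≠ ⊥) (hp : (p : 𝓞 K) ∈ P) (m : ℕ) :
    P ≤ P ^ m ⊔ Ideal.span {(p : 𝓞 K)} := by
  have h1 := (h P hP hp).1
  have hmap : Ideal.map (algebraMap ℤ (𝓞 K)) (Ideal.span {(p : ℤ)}) = Ideal.span {(p : 𝓞 K)} := by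
    rw [Ideal.map_span]; simp
  have h2 : ¬ Ideal.span {(p : 𝓞 K)} ≤ P ^ 2 := by
    intro h3
    rw [← hmap] at h3
    refine (Ideal.ramificationIdx'_ne_one_iff ?_).2 h3 h1
    rw [hmap, Ideal.span_singleton_le_iff_mem]
    exact hp
  have hpr : Prime P := Ideal.prime_of_isPrime hP0 hP
  have hd : (P ^ m ⊔ Ideal.span {(p : 𝓞 K)}) ∣ P ^ m := Ideal.dvd_iff_le.2 le_sup_left
  obtain ⟨i, hi, hi2⟩ := (dvd_prime_pow hpr m).1 hd
  rw [associated_iff_eq] at hi2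
  rw [hi2]
  have : i ≤ 1 := by
    by_contra hc
    exact h2 ((le_sup_right.trans hi2.le).trans (Ideal.pow_le_pow_right (by omega)))
  calc P = P ^ 1 := (pow_one P).symm
    _ ≤ P ^ i := Ideal.pow_le_pow_right this

theorem int_surj_pow {p : ℕ} (hpp : p.Prime) (h : SplitsCompletely K p) (P : Ideal (𝓞 K))
    (hP : P.IsPrime) (hP0 : P ≠ ⊥) (hp : (p : 𝓞 K) ∈ P) (k : ℕ) (x : 𝓞 K) :
    ∃ n : ℤ, x - n ∈ P ^ k := by
  have key : ∀ j : ℕ, ∃ (n : ℤ) (w : 𝓞 K), x - n - p ^ j * w ∈ P ^ k := by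
    intro j
    induction j with
    | zero => exact ⟨0, x, by simp⟩
    | succ j ih =>
      obtain ⟨n, w, hw⟩ := ih
      obtain ⟨m, hm⟩ := int_surj hpp h P hP hp w
      obtain ⟨a, ha, b, hb, hab⟩ := Submodule.mem_sup.1 (prime_le_pow_sup h P hP hP0 hp k hm)
      obtain ⟨c, rfl⟩ := Ideal.mem_span_singleton.1 hb
      refine ⟨n + p ^ j * m, c, ?_⟩
      have : x - ((n + p ^ j * m : ℤ) : 𝓞 K) - p ^ (j + 1) * c
          = (x - n - p ^ j * w) + p ^ j * a := by
        push_cast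
        linear_combination (-(p : 𝓞 K) ^ j) * hab
      rw [this]
      exact add_mem hw (Ideal.mul_mem_left _ _ ha)
  obtain ⟨n, w, hw⟩ := key k
  refine ⟨n, ?_⟩
  have := add_mem hw (Ideal.mul_mem_right w _ (Ideal.pow_mem_pow hp k))
  simpa using this

theorem ne_bot_of_mem {p : ℕ} (hpp : p.Prime) (P : Ideal (𝓞 K)) (hp : (p : 𝓞 K) ∈ P) :
    P ≠ ⊥ := by
  rintro rfl
  rw [Ideal.mem_bot] at hp
  exact hpp.ne_zero (by exact_mod_cast hp)

theorem finite_above {p : ℕ} (hpp : p.Prime) :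
    Finite {P : Ideal (𝓞 K) // P.IsPrime ∧ (p : 𝓞 K) ∈ P} := by
  have h0 : Ideal.span {(p : 𝓞 K)} ≠ 0 := ne_bot_of_mem hpp _ (Ideal.mem_span_singleton_self _)
  have := UniqueFactorizationMonoid.fintypeSubtypeDvd (Ideal.span {(p : 𝓞 K)}) h0
  refine Finite.of_injective (β := {J : Ideal (𝓞 K) // J ∣ Ideal.span {(p : 𝓞 K)}})
    (fun P => ⟨P.1, ?_⟩) ?_
  · exact Ideal.dvd_iff_le.2 ((Ideal.span_singleton_le_iff_mem _).2 P.2.2)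
  · intro P Q h
    exact Subtype.ext (congrArg (fun z => z.1) h)

/-- Union bound for a residue sieve on a subgroup surjecting to all local quotients. -/
theorem sieve_avoid (R : ResidueSieve K) {p : ℕ} (hpp : p.Prime)
    (hR : (∑' P : {P : Ideal (𝓞 K) // P.IsPrime ∧ (p : 𝓞 K) ∈ P}, R.meas P.1) < 1)
    (H : AddSubgroup (𝓞 K)) (x0 : 𝓞 K)
    (hH : ∀ P : Ideal (𝓞 K), P.IsPrime → (p : 𝓞 K) ∈ P → ∀ z : 𝓞 K,
      ∃ h ∈ H, z - h ∈ P ^ R.k P) :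
    ∃ h ∈ H, ∀ P : Ideal (𝓞 K), P.IsPrime → (p : 𝓞 K) ∈ P → ¬ R.Mem P (x0 + h) := by
  classical
  have := finite_above (K := K) hpp
  letI := Fintype.ofFinite {P : Ideal (𝓞 K) // P.IsPrime ∧ (p : 𝓞 K) ∈ P}
  rw [tsum_fintype] at hR
  have hfin : ∀ P : {P : Ideal (𝓞 K) // P.IsPrime ∧ (p : 𝓞 K) ∈ P},
      Finite (𝓞 K ⧸ P.1 ^ R.k P.1) := fun P =>
    Ideal.finiteQuotientOfFreeOfNeBot _ (pow_ne_zero _ (ne_bot_of_mem hpp P.1 P.2.2))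
  obtain ⟨g, hg⟩ := exists_avoid (G := H)
    (ι := {P : Ideal (𝓞 K) // P.IsPrime ∧ (p : 𝓞 K) ∈ P})
    (B := fun P => 𝓞 K ⧸ P.1 ^ R.k P.1)
    (fun P => ((Ideal.Quotient.mk (P.1 ^ R.k P.1)).toAddMonoidHom).comp H.subtype)
    (by
      intro P b
      obtain ⟨z, rfl⟩ := Ideal.Quotient.mk_surjective b
      obtain ⟨h, hh, hz⟩ := hH P.1 P.2.1 P.2.2 z
      exact ⟨⟨h, hh⟩, (Ideal.Quotient.eq.2 hz).symm⟩)
    (fun P => (Equiv.addLeft (Ideal.Quotient.mk (P.1 ^ R.k P.1) x0)) ⁻¹' (R.R P.1))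
    (by
      refine lt_of_le_of_lt (le_of_eq ?_) hR
      refine Finset.sum_congr rfl fun P _ => ?_
      unfold ResidueSieve.meas
      congr 1
      · congr 1
        exact Nat.card_congr ((Equiv.addLeft _).subtypeEquiv (fun a => Iff.rfl))
      · rw [← Nat.cast_pow, ← map_pow, Ideal.absNorm_apply, Submodule.cardQuot_apply])
  refine ⟨g.1, g.2, fun P hP hp hmem => hg ⟨P, hP, hp⟩ ?_⟩
  unfold ResidueSieve.Mem at hmem
  rw [map_add] at hmem
  exact hmem

theorem finite_primes {d : 𝓞 K} (hd : d ≠ 0) :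
    {p : ℕ | ∃ Q : Ideal (𝓞 K), Q.LiesOver (Ideal.span {(p : ℤ)}) ∧ d ∈ Q}.Finite := by
  have h1 : (Ideal.span {d}).comap (algebraMap ℤ (𝓞 K)) ≠ ⊥ := by
    intro h
    exact hd (Ideal.span_singleton_eq_bot.1 (Ideal.eq_bot_of_comap_eq_bot h))
  obtain ⟨N, hN, hN0⟩ := Submodule.exists_mem_ne_zero_of_ne_bot h1
  refine (Nat.divisors N.natAbs).finite_toSet.subset ?_
  rintro p ⟨Q, hQ, hdQ⟩
  have h2 : N ∈ Q.comap (algebraMap ℤ (𝓞 K)) :=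
    (Ideal.span_singleton_le_iff_mem _).2 hdQ hN
  have h3 : N ∈ Ideal.span {(p : ℤ)} := by rw [hQ.over]; exact h2
  rw [Ideal.mem_span_singleton] at h3
  simp only [Finset.mem_coe, Nat.mem_divisors]
  exact ⟨by simpa using Int.natAbs_dvd_natAbs.2 h3, by simpa using hN0⟩

theorem exists_above {p : ℕ} (hpp : p.Prime) :
    ∃ P : Ideal (𝓞 K), P.IsPrime ∧ (p : 𝓞 K) ∈ P := by
  have hne : Ideal.span {(p : 𝓞 K)} ≠ ⊤ := by
    intro h
    rw [Ideal.span_singleton_eq_top] at h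
    have h3 := (Ideal.absNorm_span_singleton (p : 𝓞 K))
    rw [Ideal.span_singleton_eq_top.2 h, Ideal.absNorm_top] at h3
    have h4 : Algebra.norm ℤ (p : 𝓞 K) = (p : ℤ) ^ Module.finrank ℤ (𝓞 K) := by
      rw [Module.finrank_eq_card_chooseBasisIndex]
      simpa using Algebra.norm_algebraMap_of_basis (Module.Free.chooseBasis ℤ (𝓞 K)) (p : ℤ)
    rw [h4, Int.natAbs_pow, Int.natAbs_natCast] at h3
    have h5 : Module.finrank ℤ (𝓞 K) ≠ 0 := Module.finrank_pos.ne'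
    exact (Nat.one_lt_pow h5 hpp.one_lt).ne h3
  obtain ⟨M, hM, hle⟩ := Ideal.exists_le_maximal _ hne
  exact ⟨M, hM.isPrime, hle (Ideal.mem_span_singleton_self _)⟩
end

theorem exists_factor {K L : Type*} [Field K] [NumberField K]
    [Field L] [NumberField L] (R : ResidueSieve K) (S : ResidueSieve L)
    (A : 𝓞 K →ₗ[ℤ] 𝓞 L) {p : ℕ} (hpp : p.Prime)
    (ha : ∀ x : 𝓞 K,
        (∀ P : Ideal (𝓞 K), P.IsPrime → (p : 𝓞 K) ∈ P → ¬ R.Mem P x) →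
        ∀ Q : Ideal (𝓞 L), Q.IsPrime → (p : 𝓞 L) ∈ Q → ¬ S.Mem Q (A x))
    (hb : ∀ Q : Ideal (𝓞 L), Q.IsPrime → (p : 𝓞 L) ∈ Q → ∃ x : 𝓞 K, S.Mem Q (A x))
    (hc : (∑' P : {P : Ideal (𝓞 K) // P.IsPrime ∧ (p : 𝓞 K) ∈ P}, R.meas P.1) < 1)
    (hK : SplitsCompletely K p) (hL : SplitsCompletely L p)
    (Q : Ideal (𝓞 L)) (hQ : Q.IsPrime) (hpQ : (p : 𝓞 L) ∈ Q) :
    ∃ P : Ideal (𝓞 K), P.IsPrime ∧ (p : 𝓞 K) ∈ P ∧ ∀ x ∈ P, A x ∈ Q := by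
  by_contra! hcon
  have hQ0 := ne_bot_of_mem hpp Q hpQ
  obtain ⟨x0, hx0⟩ := hb Q hQ hpQ
  let H : AddSubgroup (𝓞 K) := (Q ^ S.k Q).toAddSubgroup.comap A.toAddMonoidHom
  have hHmem : ∀ x, x ∈ H ↔ A x ∈ Q ^ S.k Q := fun x => Iff.rfl
  obtain ⟨h, hh, hav⟩ := sieve_avoid R hpp hc H x0 (by
    intro P hP hpP z
    have hP0 := ne_bot_of_mem hpp P hpP
    obtain ⟨x, hxP, hxQ⟩ := hcon P hP hpP
    obtain ⟨y, hy, b, hb', hyb⟩ := Submodule.mem_sup.1 (prime_le_pow_sup hK P hP hP0 hpP (R.k P) hxP)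
    obtain ⟨c, rfl⟩ := Ideal.mem_span_singleton.1 hb'
    have hpc : A ((p : 𝓞 K) * c) = p * A c := by
      have := A.map_smul (p : ℤ) c
      simpa [zsmul_eq_mul] using this
    have hyQ : A y ∉ Q := by
      intro hy'
      apply hxQ
      rw [← hyb, map_add, hpc]
      exact add_mem hy' (Ideal.mul_mem_right _ _ hpQ)
    -- find an integer inverse of `A y` modulo `Q ^ k`
    have hcop : Q ^ S.k Q ⊔ Ideal.span {A y} = ⊤ := by
      have hmax : Q.IsMaximal := hQ.isMaximal hQ0
      have : IsCoprime Q (Ideal.span {A y}) := by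
        rw [Ideal.isCoprime_iff_sup_eq]
        exact hmax.1.2 _ (left_lt_sup.2 fun hle => hyQ (hle (Ideal.mem_span_singleton_self _)))
      exact Ideal.isCoprime_iff_sup_eq.1 this.pow_left
    have h1 : A z ∈ Q ^ S.k Q ⊔ Ideal.span {A y} := hcop ▸ Submodule.mem_top
    obtain ⟨u, hu, v, hv, huv⟩ := Submodule.mem_sup.1 h1
    obtain ⟨w, rfl⟩ := Ideal.mem_span_singleton.1 hv
    obtain ⟨n, hn⟩ := int_surj_pow hpp hL Q hQ hQ0 hpQ (S.k Q) w
    refine ⟨z - n • y, ?_, ?_⟩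
    · rw [hHmem, map_sub, map_zsmul, zsmul_eq_mul]
      have : A z - n * A y = u + A y * (w - n) := by rw [← huv]; ring
      rw [this]
      exact add_mem hu (Ideal.mul_mem_left _ _ hn)
    · rw [sub_sub_cancel]
      exact zsmul_mem hy n)
  refine ha _ hav Q hQ hpQ ?_
  unfold ResidueSieve.Mem at hx0 ⊢
  have : Ideal.Quotient.mk (Q ^ S.k Q) (A (x0 + h)) = Ideal.Quotient.mk (Q ^ S.k Q) (A x0) := by
    rw [Ideal.Quotient.eq, map_add, add_sub_cancel_left]
    exact (hHmem h).1 hh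
  rw [this]
  exact hx0


/-- Main theorem on linear maps with local sieve conditions: a ℤ-linear map
`A : 𝓞 K → 𝓞 L` satisfying, for infinitely many prime numbers `p`, the local inclusion
condition, a nontriviality condition, a measure bound, and complete splitting of `p` in
`K` and `L`, is of the form `x ↦ ε·τ(x)` for a field embedding `τ : K → L` and some
`ε ∈ 𝓞 L`. -/
theorem linear_map_sieve_conditions {K L : Type*} [Field K] [NumberField K]
    [Field L] [NumberField L] (R : ResidueSieve K) (S : ResidueSieve L)
    (A : 𝓞 K →ₗ[ℤ] 𝓞 L)
    (hinf : {p : ℕ | p.Prime ∧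
      (∀ x : 𝓞 K,
        (∀ P : Ideal (𝓞 K), P.IsPrime → (p : 𝓞 K) ∈ P → ¬ R.Mem P x) →
        ∀ Q : Ideal (𝓞 L), Q.IsPrime → (p : 𝓞 L) ∈ Q → ¬ S.Mem Q (A x)) ∧
      (∀ Q : Ideal (𝓞 L), Q.IsPrime → (p : 𝓞 L) ∈ Q → ∃ x : 𝓞 K, S.Mem Q (A x)) ∧
      (∑' P : {P : Ideal (𝓞 K) // P.IsPrime ∧ (p : 𝓞 K) ∈ P}, R.meas P.1) < 1 ∧
      SplitsCompletely K p ∧ SplitsCompletely L p}.Infinite) :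
    ∃ (τ : K →+* L) (ε : 𝓞 L),
      ∀ x : 𝓞 K, (A x : L) = (ε : L) * τ (x : K) := by
  classical
  have hmul : ∀ x y : 𝓞 K, A x * A y = A 1 * A (x * y) := by
    intro x y
    by_contra hne
    refine hinf ((finite_primes (sub_ne_zero.2 hne)).subset ?_)
    rintro p ⟨hpp, ha, hb, hc, hK, hL⟩
    obtain ⟨Q, hQ, hpQ⟩ := exists_above (K := L) hpp
    refine ⟨Q, over_of_split hL Q hQ hpQ, ?_⟩
    obtain ⟨P, hP, hpP, hPQ⟩ := exists_factor R S A hpp ha hb hc hK hL Q hQ hpQ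
    obtain ⟨n, hn⟩ := int_surj hpp hK P hP hpP x
    have h1 := hPQ _ hn
    have h2 := hPQ _ (Ideal.mul_mem_right y _ hn)
    have e1 : A (x - n) = A x - n * A 1 := by
      have := A.map_smul n 1
      rw [map_sub]
      simpa [zsmul_eq_mul] using this
    have e2 : A ((x - n) * y) = A (x * y) - n * A y := by
      have := A.map_smul n y
      rw [sub_mul, map_sub]
      simpa [zsmul_eq_mul] using this
    have : A x * A y - A 1 * A (x * y) = A y * A (x - n) - A 1 * A ((x - n) * y) := by
      rw [e1, e2]; ring
    rw [this]
    exact sub_mem (Ideal.mul_mem_left _ _ h1) (Ideal.mul_mem_left _ _ h2)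
  have hA1 : A 1 ≠ 0 := by
    intro h0
    have hA : ∀ x, A x = 0 := by
      intro x
      have := hmul x x
      rw [h0, zero_mul] at this
      exact mul_self_eq_zero.1 this
    obtain ⟨p, hpp, ha, hb, hc, hK, hL⟩ := hinf.nonempty
    obtain ⟨Q, hQ, hpQ⟩ := exists_above (K := L) hpp
    obtain ⟨x0, hx0⟩ := hb Q hQ hpQ
    obtain ⟨h, -, hav⟩ := sieve_avoid R hpp hc ⊤ 0
      (fun P _ _ z => ⟨z, AddSubgroup.mem_top _, by simp⟩)
    refine ha _ hav Q hQ hpQ ?_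
    rw [hA] at hx0 ⊢
    exact hx0
  have hA1' : (A 1 : L) ≠ 0 := by
    intro h
    exact hA1 (RingOfIntegers.coe_eq_zero_iff.1 h)
  let τ₀ : 𝓞 K →+* L :=
    { toFun := fun x => (A x : L) / (A 1 : L)
      map_one' := div_self hA1'
      map_zero' := by simp
      map_add' := by intro x y; simp [add_div]
      map_mul' := by
        intro x y
        have : (A x : L) * (A y : L) = (A 1 : L) * (A (x * y) : L) := by
          exact_mod_cast congrArg (fun z : 𝓞 L => (z : L)) (hmul x y)
        field_simp
        linear_combination -this }
  have hinj : Function.Injective τ₀ := by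
    rw [RingHom.injective_iff_ker_eq_bot]
    have hp : (RingHom.ker τ₀).comap (algebraMap ℤ (𝓞 K)) = ⊥ := by
      rw [eq_bot_iff]
      intro n hn
      rw [Ideal.mem_comap, RingHom.mem_ker] at hn
      simpa using hn
    exact Ideal.eq_bot_of_comap_eq_bot hp
  refine ⟨IsFractionRing.lift (K := K) hinj, A 1, fun x => ?_⟩
  have : IsFractionRing.lift (K := K) hinj (x : K) = τ₀ x :=
    IsFractionRing.lift_algebraMap hinj x
  rw [this]
  change (A x : L) = (A 1 : L) * ((A x : L) / (A 1 : L))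
  field_simp
end
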